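/- A hyperbolic group contains no Baumslag–Solitar group as a subgroup: if G is a hyperbolic group, then for all nonzero integers p and q there is no injective group homomorphism from BS(p,q) into G. -/

import Mathlib

/-- The word metric on a group `G` with respect to a generating set `S`:
`wordDist S g h` is the least length of a word in `S ∪ S⁻¹` representing `g⁻¹ * h`. -/
noncomputable def wordDist {G : Type*} [Group G] (S : Set G) (g h : G) : ℝ :=
  sInf {r : ℝ | ∃ l : List G, (∀ x ∈ l, x ∈ S ∨ x⁻¹ ∈ S) ∧ l.prod = g⁻¹ * h ∧ r = l.length}

/-- The Gromov product `(x|y)_w` with respect to the word metric for `S`. -/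
noncomputable def gromovProd {G : Type*} [Group G] (S : Set G) (w x y : G) : ℝ :=
  (wordDist S x w + wordDist S y w - wordDist S x y) / 2

/-- A group is (Gromov) hyperbolic if it admits a finite generating set `S` such that
the word metric `d_S` satisfies the Gromov product four-point condition for some `δ ≥ 0`. -/
def IsHyperbolicGroup (G : Type*) [Group G] : Prop :=
  ∃ S : Set G, S.Finite ∧ Subgroup.closure S = ⊤ ∧
    ∃ δ : ℝ, 0 ≤ δ ∧ ∀ w x y z : G,
      gromovProd S w x y ≥ min (gromovProd S w x z) (gromovProd S w y z) - δ

/-- The Baumslag–Solitar group `BS(p,q) = ⟨a, t | t a^p t⁻¹ = a^q⟩`, presented on two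
generators indexed by `Bool` (`false ↦ a`, `true ↦ t`) with the single relator
`t a^p t⁻¹ a^(-q)`. -/
def BaumslagSolitar (p q : ℤ) : Type :=
  PresentedGroup ({FreeGroup.of true * FreeGroup.of false ^ p * (FreeGroup.of true)⁻¹ *
    FreeGroup.of false ^ (-q)} : Set (FreeGroup Bool))

noncomputable instance (p q : ℤ) : Group (BaumslagSolitar p q) :=
  inferInstanceAs (Group (PresentedGroup _))

/-!
In a hyperbolic group `G`, let `g` have infinite order and let `f` commute with `g`. Left
multiplication by `f` moves both ends of a geodesic `[1, gⁿ]` by the length of `f`, so for large `n`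
it moves the midpoint to within a uniform distance of that geodesic, at a position shifted by at
most the length of `f`. Hence the centralizer of `g` has linear growth in the word metric of `G`.

This has two consequences. Elements `g`, `h` generating a copy of `ℤ²` would give the centralizer
of `g` quadratic growth, so there are none. And `n` is bounded by a multiple of the length of `gⁿ`,
so `g` has positive translation length `τ(g)`. As `τ` is invariant under conjugation and
`τ(gⁿ) = |n| τ(g)`, the relation `t aᵖ t⁻¹ = a^q` forces `|p| = |q|`; but then `aᵖ` and `t²` commute
and generate a copy of `ℤ²` in `BS(p,q)`.
-/

section WordLength

open scoped Pointwise

variable {G : Type*} [Group G] {S : Set G}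

/-- The word length of `g` with respect to `S`: the least `n` such that `g` is a product of `n`
elements of `S ∪ S⁻¹`. It has the junk value `0` outside the subgroup generated by `S`. -/
noncomputable def wordLength (S : Set G) (g : G) : ℕ :=
  sInf {n : ℕ | g ∈ (S ∪ S⁻¹) ^ n}

/-- The closed ball of radius `n` around `1` in the word metric. -/
def wordBall (S : Set G) (n : ℕ) : Set G :=
  {g | wordLength S g ≤ n}

theorem mem_set_pow_iff_exists_list {M : Type*} [Monoid M] {T : Set M} {n : ℕ} {g : M} :
    g ∈ T ^ n ↔ ∃ l : List M, (∀ x ∈ l, x ∈ T) ∧ l.prod = g ∧ l.length = n := by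
  constructor
  · intro hg
    obtain ⟨f, rfl⟩ := Set.mem_pow.1 hg
    exact ⟨List.ofFn fun i ↦ (f i : M), by simp [List.mem_ofFn], rfl, List.length_ofFn⟩
  · rintro ⟨l, hl, rfl, rfl⟩
    exact Set.mem_pow.2 ⟨fun i ↦ ⟨l.get i, hl _ (l.get_mem i)⟩, by simp⟩

theorem wordDist_eq_wordLength (g h : G) : wordDist S g h = wordLength S (g⁻¹ * h) := by
  have words_eq : {r : ℝ | ∃ l : List G, (∀ x ∈ l, x ∈ S ∨ x⁻¹ ∈ S) ∧ l.prod = g⁻¹ * h ∧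
      r = l.length} = Nat.cast '' {n : ℕ | g⁻¹ * h ∈ (S ∪ S⁻¹) ^ n} := by
    ext r
    simp only [Set.mem_image, Set.mem_ofPred_eq, mem_set_pow_iff_exists_list]
    constructor
    · rintro ⟨l, hl, hprod, rfl⟩
      exact ⟨l.length, ⟨l, hl, hprod, rfl⟩, rfl⟩
    · rintro ⟨n, ⟨l, hl, hprod, rfl⟩, rfl⟩
      exact ⟨l, hl, hprod, rfl⟩
  rw [wordDist, words_eq, wordLength]
  rcases Set.eq_empty_or_nonempty {n : ℕ | g⁻¹ * h ∈ (S ∪ S⁻¹) ^ n} with hempty | hne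
  · simp [hempty]
  · exact (Nat.mono_cast.map_isLeast (isLeast_csInf hne)).csInf_eq

theorem wordLength_le_of_mem_pow {g : G} {n : ℕ} (hg : g ∈ (S ∪ S⁻¹) ^ n) :
    wordLength S g ≤ n :=
  Nat.sInf_le hg

theorem mem_pow_wordLength (hS : Subgroup.closure S = ⊤) (g : G) :
    g ∈ (S ∪ S⁻¹) ^ wordLength S g := by
  have hg : g ∈ Submonoid.closure (S ∪ S⁻¹) := by
    rw [← Subgroup.closure_toSubmonoid, hS]
    trivial
  obtain ⟨l, hl, hprod⟩ := Submonoid.exists_list_of_mem_closure hg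
  have hne : {n : ℕ | g ∈ (S ∪ S⁻¹) ^ n}.Nonempty :=
    ⟨l.length, mem_set_pow_iff_exists_list.2 ⟨l, hl, hprod, rfl⟩⟩
  exact Nat.sInf_mem hne

theorem wordLength_one : wordLength S (1 : G) = 0 :=
  Nat.le_zero.1 (wordLength_le_of_mem_pow (by simp))

theorem wordLength_inv (g : G) : wordLength S g⁻¹ = wordLength S g := by
  simp only [wordLength, ← Set.mem_inv, ← inv_pow, Set.union_inv, inv_inv, Set.union_comm]

theorem wordLength_mul_le (hS : Subgroup.closure S = ⊤) (g h : G) :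
    wordLength S (g * h) ≤ wordLength S g + wordLength S h := by
  apply wordLength_le_of_mem_pow
  rw [pow_add]
  exact Set.mul_mem_mul (mem_pow_wordLength hS g) (mem_pow_wordLength hS h)

theorem wordLength_pow_le (hS : Subgroup.closure S = ⊤) (g : G) (n : ℕ) :
    wordLength S (g ^ n) ≤ n * wordLength S g := by
  apply wordLength_le_of_mem_pow
  rw [mul_comm, pow_mul]
  exact Set.pow_mem_pow (mem_pow_wordLength hS g)

theorem wordLength_pow_le_of_lt_mul (hS : Subgroup.closure S = ⊤) (g : G) {i k n : ℕ}
    (hi : i < n * k) :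
    wordLength S (g ^ i) ≤ k * wordLength S (g ^ n) + n * wordLength S g := by
  have hn : 0 < n := Nat.pos_of_mul_pos_right (i.zero_le.trans_lt hi)
  calc wordLength S (g ^ i)
      = wordLength S ((g ^ n) ^ (i / n) * g ^ (i % n)) := by
        rw [← pow_mul, ← pow_add, Nat.div_add_mod]
    _ ≤ wordLength S ((g ^ n) ^ (i / n)) + wordLength S (g ^ (i % n)) :=
        wordLength_mul_le hS _ _
    _ ≤ i / n * wordLength S (g ^ n) + i % n * wordLength S g :=
        add_le_add (wordLength_pow_le hS _ _) (wordLength_pow_le hS _ _)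
    _ ≤ k * wordLength S (g ^ n) + n * wordLength S g := by
        gcongr
        · exact (Nat.div_lt_of_lt_mul hi).le
        · exact (Nat.mod_lt i hn).le

theorem finite_wordBall (hS : Subgroup.closure S = ⊤) (hfin : S.Finite) (n : ℕ) :
    (wordBall S n).Finite := by
  have hpow : ∀ k : ℕ, ((S ∪ S⁻¹) ^ k).Finite := by
    intro k
    induction k with
    | zero => exact pow_zero (S ∪ S⁻¹) ▸ Set.finite_one
    | succ k ih => exact pow_succ (S ∪ S⁻¹) k ▸ ih.mul (hfin.union hfin.inv)
  refine ((Set.finite_Iic n).biUnion fun k _ ↦ hpow k).subset fun g hg ↦ ?_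
  exact Set.mem_biUnion hg (mem_pow_wordLength hS g)

theorem exists_lt_wordLength_pow (hS : Subgroup.closure S = ⊤) (hfin : S.Finite) {g : G}
    (hg : ¬ IsOfFinOrder g) (n : ℕ) : ∃ k : ℕ, n < wordLength S (g ^ k) := by
  by_contra! hbounded
  exact Set.infinite_of_injective_forall_mem (injective_pow_iff_not_isOfFinOrder.2 hg)
    (s := wordBall S n) hbounded (finite_wordBall hS hfin n)

theorem card_le_of_forall_near_family (hS : Subgroup.closure S = ⊤) (hfin : S.Finite)
    {ι : Type*} (γ : ι → G) (I : Finset ι) (Y : Finset G) (D : ℕ)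
    (hY : ∀ y ∈ Y, ∃ k ∈ I, (γ k)⁻¹ * y ∈ wordBall S D) :
    Y.card ≤ I.card * (wordBall S D).ncard := by
  classical
  let ball := (finite_wordBall hS hfin D).toFinset
  have hcover : Y ⊆ I.biUnion fun k ↦ ball.image (γ k * ·) := by
    intro y hy
    obtain ⟨k, hk, hnear⟩ := hY y hy
    simp only [Finset.mem_biUnion, Finset.mem_image, ball, Set.Finite.mem_toFinset]
    exact ⟨k, hk, _, hnear, mul_inv_cancel_left _ _⟩
  refine (Finset.card_le_card hcover).trans (Finset.card_biUnion_le_card_mul _ _ _ fun k _ ↦ ?_)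
  rw [Set.ncard_eq_toFinset_card _ (finite_wordBall hS hfin D)]
  exact Finset.card_image_le

theorem wordDist_one_left (g : G) : wordDist S 1 g = wordLength S g := by
  rw [wordDist_eq_wordLength, inv_one, one_mul]

theorem wordDist_comm (g h : G) : wordDist S g h = wordDist S h g := by
  rw [wordDist_eq_wordLength, wordDist_eq_wordLength, ← wordLength_inv, mul_inv_rev, inv_inv]

theorem wordDist_mul_left (f g h : G) : wordDist S (f * g) (f * h) = wordDist S g h := by
  simp only [wordDist_eq_wordLength, mul_inv_rev, mul_assoc, inv_mul_cancel_left]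

theorem wordDist_triangle (hS : Subgroup.closure S = ⊤) (x y z : G) :
    wordDist S x z ≤ wordDist S x y + wordDist S y z := by
  simp only [wordDist_eq_wordLength]
  have hmul := wordLength_mul_le hS (x⁻¹ * y) (y⁻¹ * z)
  rw [mul_assoc, mul_inv_cancel_left] at hmul
  exact_mod_cast hmul

end WordLength

section GromovProduct

open scoped Pointwise

variable {G : Type*} [Group G] {S : Set G}

theorem gromovProd_comm (w x y : G) : gromovProd S w x y = gromovProd S w y x := by
  rw [gromovProd, gromovProd, wordDist_comm x y, add_comm (wordDist S x w)]

theorem gromovProd_mul_left (f w x y : G) :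
    gromovProd S (f * w) (f * x) (f * y) = gromovProd S w x y := by
  simp only [gromovProd, wordDist_mul_left]

theorem wordDist_sub_wordDist_le_gromovProd (hS : Subgroup.closure S = ⊤) (w x y : G) :
    wordDist S x w - wordDist S x y ≤ gromovProd S w x y := by
  have htri := wordDist_triangle hS x y w
  rw [gromovProd]
  linarith

/-- The Gromov four-point condition with constant `δ` for the word metric of `S`. -/
def IsHyperbolicWith (S : Set G) (δ : ℝ) : Prop :=
  ∀ w x y z : G, min (gromovProd S w x z) (gromovProd S w y z) - δ ≤ gromovProd S w x y

/-- `γ` runs along a geodesic from `1` to `x`. That `γ k` lies between `1` and `x` is expressed by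
the vanishing of a Gromov product; nothing is required of `γ k` for `k > wordLength S x`. -/
def IsGeodesicTo (S : Set G) (x : G) (γ : ℕ → G) : Prop :=
  ∀ k ≤ wordLength S x, wordLength S (γ k) = k ∧ gromovProd S (γ k) 1 x = 0

theorem exists_isGeodesicTo (hS : Subgroup.closure S = ⊤) (x : G) :
    ∃ γ : ℕ → G, IsGeodesicTo S x γ := by
  suffices hpoint : ∀ k, ∃ z, k ≤ wordLength S x →
      wordLength S z = k ∧ gromovProd S z 1 x = 0 from
    Classical.skolem.1 hpoint
  intro k
  by_cases hk : k ≤ wordLength S x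
  swap
  · exact ⟨1, fun h ↦ absurd h hk⟩
  have hx := mem_pow_wordLength hS x
  rw [← Nat.add_sub_cancel' hk, pow_add] at hx
  obtain ⟨z, hz, u, hu, hzu⟩ := hx
  change z * u = x at hzu
  have hzle := wordLength_le_of_mem_pow hz
  have hule := wordLength_le_of_mem_pow hu
  have hxle := wordLength_mul_le hS z u
  rw [hzu] at hxle
  have hsum : wordLength S z + wordLength S u = wordLength S x := by omega
  refine ⟨z, fun _ ↦ ⟨by omega, ?_⟩⟩
  rw [gromovProd, wordDist_one_left, wordDist_one_left, wordDist_comm, wordDist_eq_wordLength,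
    ← hzu, inv_mul_cancel_left, hzu, ← hsum]
  push_cast
  ring

namespace IsHyperbolicWith

variable {δ : ℝ} {a a₀ b b₀ y z : G}

theorem nonneg (hδ : IsHyperbolicWith S δ) : 0 ≤ δ := by
  have hdiag := hδ 1 1 1 1
  rw [min_self] at hdiag
  linarith

theorem gromovProd_le_of_near_left (hδ : IsHyperbolicWith S δ) (hS : Subgroup.closure S = ⊤)
    (ha : wordDist S a₀ a + gromovProd S y a₀ b + δ < wordDist S a₀ y) :
    gromovProd S y a b ≤ gromovProd S y a₀ b + δ := by
  have hfar : gromovProd S y a₀ b + δ < gromovProd S y a₀ a := by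
    linarith [wordDist_sub_wordDist_le_gromovProd hS y a₀ a]
  rw [gromovProd_comm y a b]
  rcases min_le_iff.1 (sub_le_iff_le_add.1 (hδ y a₀ b a)) with h | h
  · exact absurd h hfar.not_ge
  · exact h

theorem gromovProd_le_of_near (hδ : IsHyperbolicWith S δ) (hS : Subgroup.closure S = ⊤)
    (ha : wordDist S a₀ a + gromovProd S y a₀ b₀ + δ < wordDist S a₀ y)
    (hb : wordDist S b₀ b + gromovProd S y a₀ b₀ + 2 * δ < wordDist S b₀ y) :
    gromovProd S y a b ≤ gromovProd S y a₀ b₀ + 2 * δ := by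
  have hleft : gromovProd S y b₀ a ≤ gromovProd S y a₀ b₀ + δ := by
    rw [gromovProd_comm]
    exact hδ.gromovProd_le_of_near_left hS ha
  have hright : gromovProd S y b a ≤ gromovProd S y b₀ a + δ :=
    hδ.gromovProd_le_of_near_left hS (by linarith)
  rw [gromovProd_comm]
  linarith

theorem wordDist_le_of_equidistant (hδ : IsHyperbolicWith S δ)
    (hyz : wordDist S a z = wordDist S a y) :
    wordDist S z y ≤ 2 * (max (gromovProd S z a b) (gromovProd S y a b) + δ) := by
  have hcomm := wordDist_comm (S := S) y z
  have hbound := sub_le_iff_le_add.1 (hδ z a b y)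
  have hay : gromovProd S z a y = wordDist S z y / 2 := by
    rw [gromovProd]
    linarith
  have hby : gromovProd S z b y =
      gromovProd S z a b - gromovProd S y a b + wordDist S z y / 2 := by
    simp only [gromovProd]
    linarith
  rw [hay, hby] at hbound
  rcases min_le_iff.1 hbound with h | h
  · linarith [le_max_left (gromovProd S z a b) (gromovProd S y a b)]
  · linarith [le_max_right (gromovProd S z a b) (gromovProd S y a b)]

-- `f` moves both endpoints `1` and `x` of the geodesic by the same distance `wordLength S f`,
-- because `f * x = x * f`.
theorem gromovProd_mul_le_of_commute (hδ : IsHyperbolicWith S δ) (hS : Subgroup.closure S = ⊤)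
    {f m x : G} (hfx : Commute f x)
    (hm : wordLength S f + gromovProd S m 1 x + δ < wordDist S 1 m)
    (hx : wordLength S f + gromovProd S m 1 x + 2 * δ < wordDist S x m) :
    gromovProd S (f * m) 1 x ≤ gromovProd S m 1 x + 2 * δ := by
  have hprod : gromovProd S (f * m) (f * 1) (f * x) = gromovProd S m 1 x :=
    gromovProd_mul_left f m 1 x
  have hmove_one : wordDist S (f * 1) 1 = wordLength S f := by
    rw [mul_one, wordDist_comm, wordDist_one_left]
  have hmove_x : wordDist S (f * x) x = wordLength S f := by
    rw [wordDist_comm, wordDist_eq_wordLength, hfx.eq, inv_mul_cancel_left]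
  rw [← hprod]
  apply hδ.gromovProd_le_of_near hS
  · rwa [hmove_one, hprod, wordDist_mul_left]
  · rwa [hmove_x, hprod, wordDist_mul_left]

theorem exists_near_geodesic_of_commute (hδ : IsHyperbolicWith S δ)
    (hS : Subgroup.closure S = ⊤) {f x : G} {γ : ℕ → G} {R D : ℕ} (hγ : IsGeodesicTo S x γ)
    (hD : 6 * δ ≤ D) (hx : 2 * (R + D + 1) ≤ wordLength S x) (hfx : Commute f x)
    (hf : f ∈ wordBall S R) :
    ∃ k ∈ Finset.Icc (wordLength S x / 2 - R) (wordLength S x / 2 + R),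
      (γ k)⁻¹ * (f * γ (wordLength S x / 2)) ∈ wordBall S D := by
  have hδ0 := hδ.nonneg
  set mid := wordLength S x / 2
  obtain ⟨hm, hm_between⟩ := hγ mid (by omega)
  set m := γ mid
  have hfR : wordLength S f ≤ R := hf
  have hy_le := wordLength_mul_le hS f m
  have hm_le := wordLength_mul_le hS f⁻¹ (f * m)
  rw [inv_mul_cancel_left, wordLength_inv] at hm_le
  obtain ⟨hz, hz_between⟩ := hγ (wordLength S (f * m)) (by omega)
  have hfar_one : (R + D + 1 : ℝ) ≤ wordDist S 1 m := by
    rw [wordDist_one_left]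
    exact_mod_cast (by omega : R + D + 1 ≤ wordLength S m)
  have hfar_x : (R + D + 1 : ℝ) ≤ wordDist S x m := by
    rw [gromovProd, wordDist_one_left, wordDist_one_left, hm] at hm_between
    have hhalf : (R + D + 1 + mid : ℝ) ≤ wordLength S x := by
      exact_mod_cast (by omega : R + D + 1 + mid ≤ wordLength S x)
    linarith
  have hfR' : (wordLength S f : ℝ) ≤ R := by exact_mod_cast hfR
  have hy_between : gromovProd S (f * m) 1 x ≤ 2 * δ := by
    have hmul := hδ.gromovProd_mul_le_of_commute hS hfx (m := m) (by linarith) (by linarith)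
    rwa [hm_between, zero_add] at hmul
  have hnear := hδ.wordDist_le_of_equidistant (a := 1) (b := x) (y := f * m)
    (z := γ (wordLength S (f * m))) (by rw [wordDist_one_left, wordDist_one_left, hz])
  refine ⟨wordLength S (f * m), Finset.mem_Icc.2 ⟨by omega, by omega⟩, ?_⟩
  have hmax := max_le (hz_between.le.trans (by linarith)) hy_between
  rw [wordDist_eq_wordLength] at hnear
  have hnear' : (wordLength S ((γ (wordLength S (f * m)))⁻¹ * (f * m)) : ℝ) ≤ D := by linarith
  exact_mod_cast hnear'

end IsHyperbolicWith

end GromovProduct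

section LinearGrowth

variable {G : Type*} [Group G] {S T U : Set G} {g h : G}

/-- The number of elements of `T` in the ball of radius `R` for the word metric of `S` grows at
most linearly in `R`. Counting finite subsets avoids the junk value of `Set.ncard` on infinite
sets. -/
def HasLinearGrowth (S T : Set G) : Prop :=
  ∃ A : ℕ, ∀ (R : ℕ) (F : Finset G), ↑F ⊆ T ∩ wordBall S R → F.card ≤ A * (R + 1)

theorem HasLinearGrowth.mono (hU : HasLinearGrowth S U) (hTU : T ⊆ U) : HasLinearGrowth S T := by
  obtain ⟨A, hA⟩ := hU
  exact ⟨A, fun R F hF ↦ hA R F (hF.trans (Set.inter_subset_inter_left _ hTU))⟩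

theorem IsHyperbolicWith.hasLinearGrowth_centralizer {δ : ℝ} (hδ : IsHyperbolicWith S δ)
    (hS : Subgroup.closure S = ⊤) (hfin : S.Finite) (hg : ¬ IsOfFinOrder g) :
    HasLinearGrowth S (Subgroup.centralizer {g}) := by
  classical
  obtain ⟨D, hD⟩ := exists_nat_ge (6 * δ)
  refine ⟨2 * (wordBall S D).ncard, fun R F hF ↦ ?_⟩
  obtain ⟨n, hn⟩ := exists_lt_wordLength_pow hS hfin hg (2 * (R + D + 1))
  obtain ⟨γ, hγ⟩ := exists_isGeodesicTo hS (g ^ n)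
  let mid := wordLength S (g ^ n) / 2
  have hnear : ∀ y ∈ F.image (· * γ mid), ∃ k ∈ Finset.Icc (mid - R) (mid + R),
      (γ k)⁻¹ * y ∈ wordBall S D := by
    simp only [Finset.forall_mem_image]
    intro f hf
    obtain ⟨hcentral, hball⟩ := hF hf
    have hfg : Commute f g := Subgroup.mem_centralizer_singleton_iff.1 hcentral
    exact hδ.exists_near_geodesic_of_commute hS hγ hD hn.le (hfg.pow_right n) hball
  calc F.card = (F.image (· * γ mid)).card :=
        (Finset.card_image_of_injective _ (mul_left_injective _)).symm
    _ ≤ (Finset.Icc (mid - R) (mid + R)).card * (wordBall S D).ncard :=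
        card_le_of_forall_near_family hS hfin γ _ _ D hnear
    _ ≤ (2 * (R + 1)) * (wordBall S D).ncard := by
        gcongr
        rw [Nat.card_Icc]
        omega
    _ = 2 * (wordBall S D).ncard * (R + 1) := by ring

theorem HasLinearGrowth.not_injective_pow_mul_pow (hT : HasLinearGrowth S T)
    (hS : Subgroup.closure S = ⊤) (hmem : ∀ i j : ℕ, g ^ i * h ^ j ∈ T) :
    ¬ Function.Injective fun ij : ℕ × ℕ ↦ g ^ ij.1 * h ^ ij.2 := by
  classical
  intro hinj
  obtain ⟨A, hA⟩ := hT
  set C := wordLength S g + wordLength S h with hC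
  set K := A * (C + 1) with hK
  let square := Finset.range (K + 1) ×ˢ Finset.range (K + 1)
  have hball : ↑(square.image fun ij ↦ g ^ ij.1 * h ^ ij.2) ⊆ T ∩ wordBall S (K * C) := by
    rw [Finset.coe_image, Set.image_subset_iff]
    rintro ⟨i, j⟩ hij
    obtain ⟨hi, hj⟩ : i < K + 1 ∧ j < K + 1 := by simpa [square] using hij
    refine ⟨hmem i j, ?_⟩
    calc wordLength S (g ^ i * h ^ j)
        ≤ wordLength S (g ^ i) + wordLength S (h ^ j) := wordLength_mul_le hS _ _
      _ ≤ i * wordLength S g + j * wordLength S h :=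
          add_le_add (wordLength_pow_le hS g i) (wordLength_pow_le hS h j)
      _ ≤ K * wordLength S g + K * wordLength S h := by gcongr <;> omega
      _ = K * C := by rw [hC, mul_add]
  have hcard := hA (K * C) _ hball
  rw [Finset.card_image_of_injective _ hinj, Finset.card_product, Finset.card_range] at hcard
  nlinarith

theorem HasLinearGrowth.exists_forall_le_mul_wordLength_pow
    (hlin : HasLinearGrowth S (Subgroup.zpowers g)) (hS : Subgroup.closure S = ⊤)
    (hg : ¬ IsOfFinOrder g) : ∃ A : ℕ, ∀ n : ℕ, n ≤ A * wordLength S (g ^ n) := by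
  classical
  obtain ⟨A, hA⟩ := hlin
  refine ⟨A, fun n ↦ ?_⟩
  have hcount : ∀ k : ℕ,
      n * k ≤ A * (k * wordLength S (g ^ n) + n * wordLength S g + 1) := by
    intro k
    have hball : ↑((Finset.range (n * k)).image (g ^ ·)) ⊆
        (Subgroup.zpowers g : Set G) ∩
          wordBall S (k * wordLength S (g ^ n) + n * wordLength S g) := by
      rw [Finset.coe_image, Set.image_subset_iff]
      intro i hi
      have hi : i < n * k := by simpa using hi
      exact ⟨Subgroup.npow_mem_zpowers g i, wordLength_pow_le_of_lt_mul hS g hi⟩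
    have hcard := hA _ _ hball
    rwa [Finset.card_image_of_injective _ (injective_pow_iff_not_isOfFinOrder.2 hg),
      Finset.card_range] at hcard
  by_contra! hlt
  set B := A * (n * wordLength S g + 1) with hB
  have hupper : n * (B + 1) ≤ A * wordLength S (g ^ n) * (B + 1) + B := by
    linarith [hcount (B + 1)]
  have hlower : (A * wordLength S (g ^ n) + 1) * (B + 1) ≤ n * (B + 1) :=
    Nat.mul_le_mul_right _ hlt
  linarith

end LinearGrowth

section TranslationLength

open Filter Topology

variable {G : Type*} [Group G] {S : Set G}

/-- The translation length (stable length) of `g`: the limit of `wordLength S (g ^ n) / n`, which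
exists by subadditivity. -/
noncomputable def translationLength (S : Set G) (g : G) : ℝ :=
  limUnder atTop fun n : ℕ ↦ (wordLength S (g ^ n) : ℝ) / n

theorem tendsto_translationLength (hS : Subgroup.closure S = ⊤) (g : G) :
    Tendsto (fun n : ℕ ↦ (wordLength S (g ^ n) : ℝ) / n) atTop (𝓝 (translationLength S g)) := by
  have hsub : Subadditive fun n ↦ (wordLength S (g ^ n) : ℝ) := by
    intro m n
    simp only [pow_add]
    exact_mod_cast wordLength_mul_le hS (g ^ m) (g ^ n)
  have hbdd : BddBelow (Set.range fun n : ℕ ↦ (wordLength S (g ^ n) : ℝ) / n) :=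
    ⟨0, by rintro _ ⟨n, rfl⟩; positivity⟩
  exact tendsto_nhds_limUnder ⟨_, hsub.tendsto_lim hbdd⟩

theorem translationLength_inv (g : G) : translationLength S g⁻¹ = translationLength S g := by
  simp only [translationLength, inv_pow, wordLength_inv]

theorem translationLength_pow (hS : Subgroup.closure S = ⊤) (g : G) (n : ℕ) :
    translationLength S (g ^ n) = n * translationLength S g := by
  refine tendsto_nhds_unique (tendsto_translationLength hS (g ^ n)) ?_
  rcases Nat.eq_zero_or_pos n with rfl | hn
  · simp [wordLength_one]
  have hsubseq := (tendsto_translationLength hS g).comp (tendsto_id.const_mul_atTop' hn)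
  refine (hsubseq.const_mul (n : ℝ)).congr fun k ↦ ?_
  simp only [Function.comp_apply, id_eq, pow_mul, Nat.cast_mul]
  field_simp

theorem translationLength_zpow (hS : Subgroup.closure S = ⊤) (g : G) (n : ℤ) :
    translationLength S (g ^ n) = n.natAbs * translationLength S g := by
  rcases Int.natAbs_eq n with hn | hn <;> rw [hn]
  · rw [zpow_natCast, translationLength_pow hS, Int.natAbs_natCast]
  · rw [zpow_neg, translationLength_inv, zpow_natCast, translationLength_pow hS, Int.natAbs_neg,
      Int.natAbs_natCast]

theorem translationLength_conj_le (hS : Subgroup.closure S = ⊤) (t g : G) :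
    translationLength S (t * g * t⁻¹) ≤ translationLength S g := by
  have hshift : Tendsto (fun n : ℕ ↦ (wordLength S (g ^ n) : ℝ) / n + 2 * wordLength S t / n)
      atTop (𝓝 (translationLength S g)) := by
    simpa using (tendsto_translationLength hS g).add
      (tendsto_const_div_atTop_nhds_zero_nat (2 * wordLength S t : ℝ))
  refine le_of_tendsto_of_tendsto' (tendsto_translationLength hS _) hshift fun n ↦ ?_
  rw [← add_div, conj_pow]
  gcongr
  have hleft := wordLength_mul_le hS (t * g ^ n) t⁻¹
  have hright := wordLength_mul_le hS t (g ^ n)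
  rw [wordLength_inv] at hleft
  exact_mod_cast (by omega :
    wordLength S (t * g ^ n * t⁻¹) ≤ wordLength S (g ^ n) + 2 * wordLength S t)

theorem translationLength_conj (hS : Subgroup.closure S = ⊤) (t g : G) :
    translationLength S (t * g * t⁻¹) = translationLength S g := by
  refine (translationLength_conj_le hS t g).antisymm ?_
  have hback := translationLength_conj_le hS t⁻¹ (t * g * t⁻¹)
  rwa [show t⁻¹ * (t * g * t⁻¹) * t⁻¹⁻¹ = g by group] at hback

theorem HasLinearGrowth.translationLength_pos {g : G}
    (hlin : HasLinearGrowth S (Subgroup.zpowers g)) (hS : Subgroup.closure S = ⊤)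
    (hg : ¬ IsOfFinOrder g) : 0 < translationLength S g := by
  obtain ⟨A, hA⟩ := hlin.exists_forall_le_mul_wordLength_pow hS hg
  have hApos : (0 : ℝ) < A := by
    exact_mod_cast Nat.pos_of_mul_pos_right (Nat.one_pos.trans_le (hA 1))
  refine (inv_pos.2 hApos).trans_le (ge_of_tendsto (tendsto_translationLength hS g) ?_)
  filter_upwards [eventually_gt_atTop 0] with n hn
  have hAn : (n : ℝ) ≤ A * wordLength S (g ^ n) := by exact_mod_cast hA n
  rw [le_div_iff₀ (by exact_mod_cast hn), inv_mul_le_iff₀ hApos]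
  exact hAn

end TranslationLength

namespace IsHyperbolicGroup

variable {G : Type*} [Group G]

theorem natAbs_eq_of_conj_zpow_eq_zpow (hG : IsHyperbolicGroup G) {a t : G} {p q : ℤ}
    (ha : ¬ IsOfFinOrder a) (hconj : t * a ^ p * t⁻¹ = a ^ q) : p.natAbs = q.natAbs := by
  obtain ⟨S, hfin, hS, δ, -, hδ⟩ := hG
  have hcentralizer := IsHyperbolicWith.hasLinearGrowth_centralizer hδ hS hfin ha
  have hzpowers : HasLinearGrowth S (Subgroup.zpowers a) :=
    hcentralizer.mono (Subgroup.zpowers_le.2 (Subgroup.mem_centralizer_singleton_iff.2 rfl))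
  have hpos := hzpowers.translationLength_pos hS ha
  have hlength : p.natAbs * translationLength S a = q.natAbs * translationLength S a := by
    rw [← translationLength_zpow hS, ← translationLength_zpow hS, ← hconj,
      translationLength_conj hS]
  exact_mod_cast mul_right_cancel₀ hpos.ne' hlength

theorem not_injective_pow_mul_pow (hG : IsHyperbolicGroup G) {g h : G} (hgh : Commute g h) :
    ¬ Function.Injective fun ij : ℕ × ℕ ↦ g ^ ij.1 * h ^ ij.2 := by
  intro hinj
  obtain ⟨S, hfin, hS, δ, -, hδ⟩ := hG
  have hg : ¬ IsOfFinOrder g := by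
    rw [← injective_pow_iff_not_isOfFinOrder]
    intro i₁ i₂ hpow
    exact congrArg Prod.fst (@hinj (i₁, 0) (i₂, 0) (by simpa using hpow))
  have hcentralizer := IsHyperbolicWith.hasLinearGrowth_centralizer hδ hS hfin hg
  refine hcentralizer.not_injective_pow_mul_pow hS (fun i j ↦ ?_) hinj
  exact Subgroup.mem_centralizer_singleton_iff.2
    (((Commute.refl g).pow_left i).mul_left (hgh.symm.pow_left j))

end IsHyperbolicGroup

theorem commute_zpow_sq_of_conj_zpow {G : Type*} [Group G] {a t : G} {p q : ℤ}
    (hpq : p.natAbs = q.natAbs) (hconj : t * a ^ p * t⁻¹ = a ^ q) :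
    Commute (a ^ p) (t ^ 2) := by
  have hconj_twice : t * (t * a ^ p * t⁻¹) * t⁻¹ = a ^ p := by
    rcases Int.natAbs_eq_natAbs_iff.1 hpq with rfl | rfl
    · rw [hconj, hconj]
    · rw [hconj, ← inv_inj, conj_inv, ← zpow_neg, hconj, zpow_neg, inv_inv]
  have hsq : t ^ 2 * a ^ p * (t ^ 2)⁻¹ = a ^ p := by
    simpa only [pow_two, mul_inv_rev, mul_assoc] using hconj_twice
  exact (mul_inv_eq_iff_eq_mul.1 hsq).symm

namespace BaumslagSolitar

variable (p q : ℤ)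

/-- The generator `a` of `BS(p,q) = ⟨a, t | t a^p t⁻¹ = a^q⟩`. -/
def base : BaumslagSolitar p q :=
  PresentedGroup.of false

/-- The generator `t` (the stable letter) of `BS(p,q) = ⟨a, t | t a^p t⁻¹ = a^q⟩`. -/
def stable : BaumslagSolitar p q :=
  PresentedGroup.of true

theorem stable_conj_base_zpow :
    stable p q * base p q ^ p * (stable p q)⁻¹ = base p q ^ q := by
  have hrelator : stable p q * base p q ^ p * (stable p q)⁻¹ * base p q ^ (-q) = 1 :=
    PresentedGroup.one_of_mem (rels := {FreeGroup.of true * FreeGroup.of false ^ p *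
      (FreeGroup.of true)⁻¹ * FreeGroup.of false ^ (-q)}) (Set.mem_singleton _)
  rwa [zpow_neg, mul_inv_eq_one] at hrelator

variable {p q}

theorem exists_hom {M : Type*} [Group M] {a t : M} (hconj : t * a ^ p * t⁻¹ = a ^ q) :
    ∃ ψ : BaumslagSolitar p q →* M, ψ (base p q) = a ∧ ψ (stable p q) = t := by
  let images : Bool → M := fun b ↦ if b then t else a
  have hrels : ∀ r ∈ ({FreeGroup.of true * FreeGroup.of false ^ p * (FreeGroup.of true)⁻¹ *
      FreeGroup.of false ^ (-q)} : Set (FreeGroup Bool)), FreeGroup.lift images r = 1 := by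
    simp [images, hconj]
  exact ⟨PresentedGroup.toGroup hrels, PresentedGroup.toGroup.of hrels,
    PresentedGroup.toGroup.of hrels⟩

-- `BS(p,q)` acts on `ℚ` by affine maps, and `a` acts by a translation.
theorem injective_base_zpow (hp : p ≠ 0) (hq : q ≠ 0) :
    Function.Injective fun n : ℤ ↦ base p q ^ n := by
  have hp' : (p : ℚ) ≠ 0 := by exact_mod_cast hp
  have hq' : (q : ℚ) ≠ 0 := by exact_mod_cast hq
  let translation : Equiv.Perm ℚ := Equiv.addRight 1
  let dilation : Equiv.Perm ℚ := Equiv.mulRight₀ ((q : ℚ) / p) (div_ne_zero hq' hp')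
  have htranslation : ∀ (n : ℤ) (x : ℚ), (translation ^ n) x = x + n := by
    simp [translation]
  have hconj : dilation * translation ^ p * dilation⁻¹ = translation ^ q := by
    rw [mul_inv_eq_iff_eq_mul]
    ext x
    simp only [Equiv.Perm.mul_apply, htranslation, dilation, Equiv.mulRight₀_apply]
    field_simp
  obtain ⟨ψ, hψ, -⟩ := exists_hom hconj
  intro m n hmn
  have himage : (translation ^ m) 0 = (translation ^ n) 0 := by
    rw [← hψ, ← map_zpow, ← map_zpow]
    exact congrArg (fun g ↦ ψ g 0) hmn
  simpa only [htranslation, zero_add, Int.cast_inj] using himage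

theorem not_isOfFinOrder_base (hp : p ≠ 0) (hq : q ≠ 0) : ¬ IsOfFinOrder (base p q) :=
  injective_zpow_iff_not_isOfFinOrder.1 (injective_base_zpow hp hq)

theorem injective_base_zpow_mul_stable_zpow (hp : p ≠ 0) (hq : q ≠ 0) :
    Function.Injective fun ij : ℤ × ℤ ↦ base p q ^ ij.1 * stable p q ^ ij.2 := by
  rintro ⟨i₁, j₁⟩ ⟨i₂, j₂⟩ hij
  simp only at hij
  -- `ψ` is the exponent sum of `t`, which recovers `j₁` and `j₂`.
  obtain ⟨ψ, hbase, hstable⟩ :=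
    exists_hom (p := p) (q := q) (a := (1 : Multiplicative ℤ)) (t := .ofAdd 1) (by simp)
  have hj : j₁ = j₂ := by
    have hψ := congrArg (fun g ↦ (ψ g).toAdd) hij
    simpa [hbase, hstable] using hψ
  subst hj
  rw [injective_base_zpow hp hq (mul_right_cancel hij)]

theorem injective_pow_base_zpow_mul_pow_stable_sq (hp : p ≠ 0) (hq : q ≠ 0) :
    Function.Injective fun ij : ℕ × ℕ ↦ (base p q ^ p) ^ ij.1 * (stable p q ^ 2) ^ ij.2 := by
  have hexponents : Function.Injective fun ij : ℕ × ℕ ↦ (p * ij.1, (2 * ij.2 : ℤ)) := by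
    rintro ⟨i₁, j₁⟩ ⟨i₂, j₂⟩ hij
    simpa [hp] using hij
  convert (injective_base_zpow_mul_stable_zpow hp hq).comp hexponents using 2 with ij
  simp only [Function.comp_apply, zpow_mul, zpow_natCast, zpow_ofNat]

end BaumslagSolitar

/-- A hyperbolic group contains no Baumslag–Solitar group as a subgroup. -/
theorem stmt_5 {G : Type*} [Group G] (hG : IsHyperbolicGroup G)
    (p q : ℤ) (hp : p ≠ 0) (hq : q ≠ 0) :
    ¬ ∃ φ : BaumslagSolitar p q →* G, Function.Injective φ := by
  rintro ⟨φ, hφ⟩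
  set a := φ (BaumslagSolitar.base p q)
  set t := φ (BaumslagSolitar.stable p q)
  have ha : ¬ IsOfFinOrder a := by
    rw [hφ.isOfFinOrder_iff]
    exact BaumslagSolitar.not_isOfFinOrder_base hp hq
  have hconj : t * a ^ p * t⁻¹ = a ^ q := by
    simpa only [map_mul, map_inv, map_zpow] using
      congrArg φ (BaumslagSolitar.stable_conj_base_zpow p q)
  have hpq : p.natAbs = q.natAbs := hG.natAbs_eq_of_conj_zpow_eq_zpow ha hconj
  have hcomm : Commute (a ^ p) (t ^ 2) := commute_zpow_sq_of_conj_zpow hpq hconj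
  refine hG.not_injective_pow_mul_pow hcomm ?_
  simpa only [Function.comp_def, map_mul, map_pow, map_zpow] using
    hφ.comp (BaumslagSolitar.injective_pow_base_zpow_mul_pow_stable_sq hp hq)
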